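/- Let n ≥ 3 and let x_1, …, x_n be distinct real numbers. Then there exists a unique θ̂ ∈ ℍ such that Q(θ̂) = θ̂. Moreover, this θ̂ is the unique maximizer of the Cauchy likelihood on ℍ: L(θ) ≤ L(θ̂) for every θ ∈ ℍ, with equality only for θ = θ̂. -/

import Mathlib

open Complex Finset

/-- The Cauchy likelihood of the sample `x` at parameter `θ = μ + iσ`. -/
noncomputable def cauchyL {n : ℕ} (x : Fin n → ℝ) (θ : ℂ) : ℝ :=
  ∏ j, (θ.im / Real.pi) / ((x j - θ.re) ^ 2 + θ.im ^ 2)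

/-- The polynomial `h(θ) = ∏ (x_j − θ)`. -/
noncomputable def hpoly {n : ℕ} (x : Fin n → ℝ) : ℂ → ℂ :=
  fun θ => ∏ j, ((x j : ℂ) - θ)

/-- `q(θ) = θ − n·h(θ)/h'(θ)`. -/
noncomputable def qmap {n : ℕ} (x : Fin n → ℝ) : ℂ → ℂ :=
  fun θ => θ - (n : ℂ) * hpoly x θ / deriv (hpoly x) θ

/-- `Q = q ∘ q`. -/
noncomputable def Qmap {n : ℕ} (x : Fin n → ℝ) : ℂ → ℂ :=
  fun θ => qmap x (qmap x θ)


/-!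
Writing `S(z) = ∑ 1 / (z - x_j)` one has `q(z) = z - n / S(z)`, and `q(z) - q(w)` is `-(z - w)`
times `n / (S(z) S(w))` times the inner product of the centered vectors `1 / (z - x_j)` and
`1 / (conj w - x_j)`. Taking `w = conj z` expresses `Im q(z)` through the variance of
`1 / (z - x_j)`. The strict Cauchy–Schwarz inequality then says that `z ↦ conj (q z)` strictly
contracts the hyperbolic distance of the upper half-plane. This map is a square root of `Q`, so `Q`
has at most one fixed point.

Critical points of the likelihood `L` are the solutions of `q(θ) = conj θ`, hence are fixed by `Q`.
A maximizer exists because `L(θ) = O(1 / cosh (dist θ i))`, and every maximizer is a critical point.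
-/

open Function
open scoped ComplexConjugate UpperHalfPlane

section Centering

variable {ι : Type*} [Fintype ι]

/-- The deviations `v i - mean v`, as a vector of the Hermitian space `ℂ ^ ι`, so that inner
products of such vectors are (unnormalised) covariances. -/
noncomputable def centered (v : ι → ℂ) : EuclideanSpace ℂ ι :=
  WithLp.toLp 2 fun i => v i - (∑ j, v j) / Fintype.card ι

lemma centered_apply (v : ι → ℂ) (i : ι) :
    centered v i = v i - (∑ j, v j) / Fintype.card ι := rfl

lemma inner_centered [Nonempty ι] (v w : ι → ℂ) :
    inner ℂ (centered v) (centered w) =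
      ∑ i, conj (v i) * w i - conj (∑ i, v i) * (∑ i, w i) / Fintype.card ι := by
  have hcard : (Fintype.card ι : ℂ) ≠ 0 := Nat.cast_ne_zero.mpr Fintype.card_ne_zero
  have expand (i : ι) : inner ℂ (centered v i) (centered w i) =
      conj (v i) * w i - conj (v i) * ((∑ j, w j) / Fintype.card ι)
        - conj (∑ j, v j) / Fintype.card ι * w i
        + conj (∑ j, v j) / Fintype.card ι * ((∑ j, w j) / Fintype.card ι) := by
    simp only [centered_apply, RCLike.inner_apply, map_sub, map_div₀, Complex.conj_natCast]
    ring
  simp only [PiLp.inner_apply, expand, sum_add_distrib, sum_sub_distrib, ← sum_mul, ← mul_sum,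
    ← map_sum, sum_const, card_univ, nsmul_eq_mul]
  field_simp
  ring

lemma norm_centered_conj (v : ι → ℂ) : ‖centered fun i => conj (v i)‖ = ‖centered v‖ := by
  have centered_conj (i : ι) : centered (fun i => conj (v i)) i = conj (centered v i) := by
    simp [centered_apply]
  simp only [EuclideanSpace.norm_eq, centered_conj, RCLike.norm_conj]

lemma centered_ne_zero_of_injective [Nontrivial ι] {v : ι → ℂ} (hv : Injective v) :
    centered v ≠ 0 := by
  intro h
  have eq_mean (i : ι) : v i = (∑ j, v j) / Fintype.card ι :=
    sub_eq_zero.mp (congrArg (· i) h)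
  obtain ⟨i, j, hij⟩ := exists_pair_ne ι
  exact hij (hv ((eq_mean i).trans (eq_mean j).symm))

lemma norm_inner_centered_lt {v w : ι → ℂ}
    (hvw : ∀ r s t : ℂ, (∀ i, r * v i + s * w i = t) → r = 0 ∧ s = 0) :
    ‖(inner ℂ (centered v) (centered w) : ℂ)‖ < ‖centered v‖ * ‖centered w‖ := by
  refine (norm_inner_le_norm _ _).lt_of_ne fun heq => ?_
  rcases ((norm_inner_eq_norm_tfae ℂ _ _).out 0 2).mp heq with hv | ⟨r, hr⟩
  · have affine (i : ι) : 1 * v i + 0 * w i = (∑ j, v j) / Fintype.card ι := by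
      simpa using sub_eq_zero.mp (congrArg (· i) hv)
    exact one_ne_zero (hvw _ _ _ affine).1
  · have affine (i : ι) : -r * v i + 1 * w i =
        (∑ j, w j) / Fintype.card ι - r * ((∑ j, v j) / Fintype.card ι) := by
      have hi : centered w i = r * centered v i := congrArg (· i) hr
      rw [centered_apply, centered_apply] at hi
      linear_combination hi
    exact one_ne_zero (hvw _ _ _ affine).2

end Centering

section CauchyKernel

lemma sub_ofReal_ne_zero {z : ℂ} (hz : z.im ≠ 0) (t : ℝ) : z - t ≠ 0 :=
  sub_ne_zero.mpr <| ne_of_apply_ne Complex.im <| by simpa using hz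

variable {ι : Type*}

/-- The Cauchy kernel `1 / (z - x i)` with pole at the `i`-th sample point. -/
noncomputable def cauchyKernel (x : ι → ℝ) (z : ℂ) (i : ι) : ℂ := (z - x i)⁻¹

lemma cauchyKernel_conj (x : ι → ℝ) (z : ℂ) (i : ι) :
    cauchyKernel x (conj z) i = conj (cauchyKernel x z i) := by
  simp [cauchyKernel]

lemma cauchyKernel_injective {x : ι → ℝ} (hx : Injective x) (z : ℂ) :
    Injective (cauchyKernel x z) :=
  inv_injective.comp <| sub_right_injective.comp <| ofReal_injective.comp hx

lemma cauchyKernel_sub (x : ι → ℝ) {z w : ℂ} (hz : z.im ≠ 0) (hw : w.im ≠ 0) (i : ι) :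
    cauchyKernel x z i - cauchyKernel x w i =
      (w - z) * (cauchyKernel x z i * cauchyKernel x w i) := by
  have hzi := sub_ofReal_ne_zero hz (x i)
  have hwi := sub_ofReal_ne_zero hw (x i)
  simp only [cauchyKernel]
  field_simp
  ring

lemma cauchyKernel_im (x : ι → ℝ) (z : ℂ) (i : ι) :
    (cauchyKernel x z i).im = -z.im * normSq (cauchyKernel x z i) := by
  simp [cauchyKernel, inv_im, div_eq_mul_inv]

variable [Fintype ι]

lemma eq_zero_of_cauchyKernel_combination_eq_const {x : ι → ℝ} (hx : Injective x)
    (hι : 3 ≤ Fintype.card ι) {z w : ℂ} (hz : z.im ≠ 0) (hw : w.im ≠ 0) (hzw : z ≠ w) (r s t : ℂ)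
    (h : ∀ i, r * cauchyKernel x z i + s * cauchyKernel x w i = t) : r = 0 ∧ s = 0 := by
  -- Clearing denominators gives a polynomial of degree at most two vanishing at every `x i`.
  let p : Polynomial ℂ := .C t * (.C z - .X) * (.C w - .X) - .C r * (.C w - .X) - .C s * (.C z - .X)
  have hroot (i : ι) : p.eval (x i : ℂ) = 0 := by
    have hzi := sub_ofReal_ne_zero hz (x i)
    have hwi := sub_ofReal_ne_zero hw (x i)
    have hi := h i
    simp only [cauchyKernel] at hi
    field_simp at hi
    simp only [p, Polynomial.eval_sub, Polynomial.eval_mul, Polynomial.eval_C, Polynomial.eval_X]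
    linear_combination -hi
  have hdeg : p.natDegree ≤ 2 := by simp only [p]; compute_degree
  have hp : p = 0 := Polynomial.eq_zero_of_natDegree_lt_card_of_eval_eq_zero p
    (ofReal_injective.comp hx) hroot (hdeg.trans_lt hι)
  have hpz : r = 0 ∨ w - z = 0 := by simpa [p] using congrArg (Polynomial.eval z) hp
  have hpw : s = 0 ∨ z - w = 0 := by simpa [p] using congrArg (Polynomial.eval w) hp
  exact ⟨hpz.resolve_right (sub_ne_zero.mpr hzw.symm), hpw.resolve_right (sub_ne_zero.mpr hzw)⟩

/-- The sum `∑ 1 / (z - x i)` of the Cauchy kernels, which is the logarithmic derivative of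
`z ↦ ∏ (x i - z)`. It is not divided by the sample size. -/
noncomputable def cauchyTransform (x : ι → ℝ) (z : ℂ) : ℂ := ∑ i, cauchyKernel x z i

lemma cauchyTransform_conj (x : ι → ℝ) (z : ℂ) :
    cauchyTransform x (conj z) = conj (cauchyTransform x z) := by
  simp only [cauchyTransform, cauchyKernel_conj, map_sum]

lemma cauchyTransform_sub (x : ι → ℝ) {z w : ℂ} (hz : z.im ≠ 0) (hw : w.im ≠ 0) :
    cauchyTransform x z - cauchyTransform x w =
      (w - z) * ∑ i, cauchyKernel x z i * cauchyKernel x w i := by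
  simp only [cauchyTransform, ← sum_sub_distrib, mul_sum, cauchyKernel_sub x hz hw]

lemma cauchyTransform_ne_zero [Nonempty ι] (x : ι → ℝ) {z : ℂ} (hz : z.im ≠ 0) :
    cauchyTransform x z ≠ 0 := by
  have hpos : 0 < ∑ i, normSq (cauchyKernel x z i) :=
    sum_pos (fun i _ => normSq_pos.mpr (inv_ne_zero (sub_ofReal_ne_zero hz (x i))))
      univ_nonempty
  have him : (cauchyTransform x z).im = -z.im * ∑ i, normSq (cauchyKernel x z i) := by
    simp only [cauchyTransform, im_sum, cauchyKernel_im, mul_sum]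
  exact ne_of_apply_ne Complex.im (him ▸ mul_ne_zero (neg_ne_zero.mpr hz) hpos.ne')

end CauchyKernel

section NewtonMap

variable {n : ℕ}

lemma logDeriv_hpoly (x : Fin n → ℝ) {z : ℂ} (hz : z.im ≠ 0) :
    logDeriv (hpoly x) z = cauchyTransform x z := by
  have hne (j : Fin n) : (x j : ℂ) - z ≠ 0 := by
    simpa only [neg_sub] using neg_ne_zero.mpr (sub_ofReal_ne_zero hz (x j))
  have hfactor (j : Fin n) : logDeriv (fun w : ℂ => (x j : ℂ) - w) z = cauchyKernel x z j := by
    rw [logDeriv_apply, deriv_const_sub, deriv_id'', cauchyKernel, neg_div, one_div, ← inv_neg,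
      neg_sub]
  unfold hpoly
  rw [logDeriv_prod (fun j _ => hne j) (fun j _ => by fun_prop)]
  exact sum_congr rfl fun j _ => hfactor j

lemma qmap_eq (x : Fin n → ℝ) {z : ℂ} (hz : z.im ≠ 0) :
    qmap x z = z - n / cauchyTransform x z := by
  rw [← logDeriv_hpoly x hz, logDeriv_apply, div_div_eq_mul_div, qmap]

lemma qmap_conj (x : Fin n → ℝ) {z : ℂ} (hz : z.im ≠ 0) : qmap x (conj z) = conj (qmap x z) := by
  have hz' : (conj z).im ≠ 0 := by simpa using hz
  rw [qmap_eq x hz, qmap_eq x hz', cauchyTransform_conj]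
  simp

lemma qmap_sub [Nonempty (Fin n)] (x : Fin n → ℝ) {z w : ℂ} (hz : z.im ≠ 0) (hw : w.im ≠ 0) :
    qmap x z - qmap x w = -(z - w) *
      (n * inner ℂ (centered (cauchyKernel x (conj w))) (centered (cauchyKernel x z)) /
        (cauchyTransform x z * cauchyTransform x w)) := by
  have hS := cauchyTransform_ne_zero x hz
  have hT := cauchyTransform_ne_zero x hw
  have hn : (n : ℂ) ≠ 0 := by simpa using Fintype.card_ne_zero (α := Fin n)
  have hinner : inner ℂ (centered (cauchyKernel x (conj w))) (centered (cauchyKernel x z)) =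
      ∑ i, cauchyKernel x z i * cauchyKernel x w i
        - cauchyTransform x z * cauchyTransform x w / n := by
    simp only [inner_centered, cauchyKernel_conj, conj_conj, map_sum, Fintype.card_fin,
      cauchyTransform, mul_comm]
  have hdiff : qmap x z - qmap x w = (z - w) + n * (cauchyTransform x z - cauchyTransform x w) /
      (cauchyTransform x z * cauchyTransform x w) := by
    rw [qmap_eq x hz, qmap_eq x hw]
    field_simp
    ring
  rw [hdiff, hinner, cauchyTransform_sub x hz hw]
  field_simp
  ring

lemma qmap_im [Nonempty (Fin n)] (x : Fin n → ℝ) {z : ℂ} (hz : z.im ≠ 0) :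
    (qmap x z).im =
      -z.im * (n * ‖centered (cauchyKernel x z)‖ ^ 2 / ‖cauchyTransform x z‖ ^ 2) := by
  have hdiff := qmap_sub x hz (w := conj z) (by simpa using hz)
  rw [qmap_conj x hz, conj_conj, inner_self_eq_norm_sq_to_K, cauchyTransform_conj, mul_conj,
    normSq_eq_norm_sq, sub_conj, sub_conj] at hdiff
  apply ofReal_injective
  refine mul_left_cancel₀ (mul_ne_zero two_ne_zero I_ne_zero) ?_
  push_cast at hdiff ⊢
  linear_combination hdiff

lemma qmap_im_neg [Nontrivial (Fin n)] {x : Fin n → ℝ} (hx : Injective x) (z : ℍ) :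
    (qmap x z).im < 0 := by
  have hvar : 0 < ‖centered (cauchyKernel x z)‖ :=
    norm_pos_iff.mpr (centered_ne_zero_of_injective (cauchyKernel_injective hx z))
  have hS : 0 < ‖cauchyTransform x z‖ := norm_pos_iff.mpr (cauchyTransform_ne_zero x z.im_ne_zero)
  have hn : (0 : ℝ) < n := by simpa using Fintype.card_pos (α := Fin n)
  rw [qmap_im x z.im_ne_zero, neg_mul, neg_lt_zero]
  exact mul_pos z.im_pos (by positivity)

/-- The anti-holomorphic self-map `z ↦ conj (q z)` of the upper half-plane. Since `q` commutes with
conjugation, it is a square root of `Q` under composition. -/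
noncomputable def conjQmap [Nontrivial (Fin n)] {x : Fin n → ℝ} (hx : Injective x) (z : ℍ) : ℍ :=
  ⟨conj (qmap x z), by simpa using qmap_im_neg hx z⟩

lemma coe_conjQmap_conjQmap [Nontrivial (Fin n)] {x : Fin n → ℝ} (hx : Injective x) (z : ℍ) :
    (conjQmap hx (conjQmap hx z) : ℂ) = Qmap x z := by
  simp only [conjQmap, Qmap, qmap_conj x (qmap_im_neg hx z).ne, conj_conj]

lemma dist_lt_dist_of_norm_sq_mul_lt {z w z' w' : ℍ}
    (h : ‖(z - w : ℂ)‖ ^ 2 * (z'.im * w'.im) < ‖(z' - w' : ℂ)‖ ^ 2 * (z.im * w.im)) :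
    dist z w < dist z' w' := by
  rw [← abs_of_nonneg (dist_nonneg (x := z)), ← abs_of_nonneg (dist_nonneg (x := z')),
    ← Real.cosh_lt_cosh, UpperHalfPlane.cosh_dist, UpperHalfPlane.cosh_dist, add_lt_add_iff_left,
    div_lt_div_iff₀ (by positivity) (by positivity), Complex.dist_eq, Complex.dist_eq]
  linarith

lemma norm_inner_centered_cauchyKernel_lt (hn : 3 ≤ n) {x : Fin n → ℝ} (hx : Injective x)
    (z w : ℍ) :
    ‖(inner ℂ (centered (cauchyKernel x (conj (w : ℂ)))) (centered (cauchyKernel x z)) : ℂ)‖ <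
      ‖centered (cauchyKernel x w)‖ * ‖centered (cauchyKernel x z)‖ := by
  have hw : (conj (w : ℂ)).im ≠ 0 := by simpa using w.im_ne_zero
  have hne : conj (w : ℂ) ≠ z := by
    refine ne_of_apply_ne Complex.im (ne_of_lt ?_)
    simpa using (neg_neg_of_pos w.im_pos).trans z.im_pos
  have hnorm : ‖centered (cauchyKernel x (conj (w : ℂ)))‖ = ‖centered (cauchyKernel x w)‖ := by
    simpa only [← cauchyKernel_conj] using norm_centered_conj (cauchyKernel x w)
  rw [← hnorm]
  exact norm_inner_centered_lt <|
    eq_zero_of_cauchyKernel_combination_eq_const hx (by simpa using hn) hw z.im_ne_zero hne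

lemma dist_conjQmap_lt [Nontrivial (Fin n)] (hn : 3 ≤ n) {x : Fin n → ℝ} (hx : Injective x)
    {z w : ℍ} (hzw : z ≠ w) : dist (conjQmap hx z) (conjQmap hx w) < dist z w := by
  have hS : 0 < ‖cauchyTransform x z‖ := norm_pos_iff.mpr (cauchyTransform_ne_zero x z.im_ne_zero)
  have hT : 0 < ‖cauchyTransform x w‖ := norm_pos_iff.mpr (cauchyTransform_ne_zero x w.im_ne_zero)
  have hdist : 0 < ‖(z - w : ℂ)‖ :=
    norm_pos_iff.mpr (sub_ne_zero.mpr (UpperHalfPlane.coe_injective.ne hzw))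
  have him (a : ℍ) : (conjQmap hx a).im =
      a.im * (n * ‖centered (cauchyKernel x a)‖ ^ 2 / ‖cauchyTransform x a‖ ^ 2) := by
    simp [conjQmap, qmap_im x a.im_ne_zero]
  apply dist_lt_dist_of_norm_sq_mul_lt
  calc ‖(conjQmap hx z - conjQmap hx w : ℂ)‖ ^ 2 * (z.im * w.im)
      = ‖(z - w : ℂ)‖ ^ 2 * (z.im * w.im) *
          (n / (‖cauchyTransform x z‖ * ‖cauchyTransform x w‖)) ^ 2 *
          ‖(inner ℂ (centered (cauchyKernel x (conj (w : ℂ))))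
            (centered (cauchyKernel x z)) : ℂ)‖ ^ 2 := by
        simp only [conjQmap, ← map_sub, RCLike.norm_conj, qmap_sub x z.im_ne_zero w.im_ne_zero,
          norm_mul, norm_neg, norm_div, Complex.norm_natCast]
        ring
    _ < ‖(z - w : ℂ)‖ ^ 2 * (z.im * w.im) *
          (n / (‖cauchyTransform x z‖ * ‖cauchyTransform x w‖)) ^ 2 *
          (‖centered (cauchyKernel x w)‖ * ‖centered (cauchyKernel x z)‖) ^ 2 := by
        gcongr
        exact norm_inner_centered_cauchyKernel_lt hn hx z w
    _ = ‖(z - w : ℂ)‖ ^ 2 * ((conjQmap hx z).im * (conjQmap hx w).im) := by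
        rw [him, him]
        ring

lemma eq_of_comp_self_fixed_of_dist_lt {X : Type*} [PseudoMetricSpace X] {f : X → X}
    (hf : ∀ a b, a ≠ b → dist (f a) (f b) < dist a b) {a b : X} (ha : f (f a) = a)
    (hb : f (f b) = b) : a = b := by
  by_contra hab
  have hfab : f a ≠ f b := fun h => hab (by rw [← ha, ← hb, h])
  have hlt : dist (f (f a)) (f (f b)) < dist a b := (hf _ _ hfab).trans (hf _ _ hab)
  rw [ha, hb] at hlt
  exact lt_irrefl _ hlt

lemma eq_of_Qmap_eq_self (hn : 3 ≤ n) {x : Fin n → ℝ} (hx : Injective x) {z w : ℍ}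
    (hz : Qmap x z = z) (hw : Qmap x w = w) : z = w := by
  have : Nontrivial (Fin n) := Fin.nontrivial_iff_two_le.mpr (by lia)
  refine eq_of_comp_self_fixed_of_dist_lt (f := conjQmap hx)
    (fun _ _ => dist_conjQmap_lt hn hx) ?_ ?_
  · rwa [← UpperHalfPlane.coe_inj, coe_conjQmap_conjQmap]
  · rwa [← UpperHalfPlane.coe_inj, coe_conjQmap_conjQmap]

end NewtonMap

section Likelihood

/-- The density at `t` of the Cauchy distribution with location `z.re` and scale `z.im`. -/
noncomputable def cauchyDensity (z : ℂ) (t : ℝ) : ℝ :=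
  (z.im / Real.pi) / ((t - z.re) ^ 2 + z.im ^ 2)

lemma cauchyDensity_pos (z : ℍ) (t : ℝ) : 0 < cauchyDensity z t :=
  div_pos (div_pos z.im_pos Real.pi_pos) (by have := z.im_pos; positivity)

lemma cauchyDensity_le_half (z : ℍ) (t : ℝ) :
    cauchyDensity z t ≤ (z.im / 2) / ((t - z.re) ^ 2 + z.im ^ 2) := by
  change z.im / Real.pi / ((t - z.re) ^ 2 + z.im ^ 2) ≤ _
  gcongr
  exact Real.two_le_pi

lemma cosh_dist_I (z : ℍ) :
    Real.cosh (dist z UpperHalfPlane.I) = (z.re ^ 2 + z.im ^ 2 + 1) / (2 * z.im) := by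
  simp [UpperHalfPlane.cosh_dist']

lemma cauchyDensity_le_cosh_dist (z : ℍ) (t : ℝ) :
    cauchyDensity z t ≤ Real.cosh (dist z UpperHalfPlane.I) := by
  calc cauchyDensity z t ≤ (z.im / 2) / ((t - z.re) ^ 2 + z.im ^ 2) := cauchyDensity_le_half z t
    _ ≤ (z.im / 2) / (0 + z.im ^ 2) := by gcongr; positivity
    _ = (0 + 0 + 1) / (2 * z.im) := by field_simp; ring
    _ ≤ Real.cosh (dist z UpperHalfPlane.I) := by
        rw [cosh_dist_I]
        gcongr <;> positivity

lemma sq_add_sq_add_one_le {a b m : ℝ} (hab : a ≠ b) (hm : |a - m| ≤ |b - m|) (s : ℝ) :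
    m ^ 2 + s ^ 2 + 1 ≤ (2 + 4 * (2 * b ^ 2 + 1) / (a - b) ^ 2) * ((b - m) ^ 2 + s ^ 2) := by
  have hpos : 0 < (a - b) ^ 2 := sq_pos_of_ne_zero (sub_ne_zero.mpr hab)
  have hfar : (a - b) ^ 2 ≤ 4 * ((b - m) ^ 2 + s ^ 2) := by
    nlinarith [sq_le_sq.mpr hm, sq_nonneg (a - m + (b - m)), sq_nonneg s]
  have hconst : 2 * b ^ 2 + 1 ≤ 4 * (2 * b ^ 2 + 1) / (a - b) ^ 2 * ((b - m) ^ 2 + s ^ 2) := by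
    rw [div_mul_eq_mul_div, le_div_iff₀ hpos]
    nlinarith [sq_nonneg b]
  nlinarith [sq_nonneg (2 * b - m), sq_nonneg s]

lemma cauchyDensity_le_div_cosh_dist {a b : ℝ} (hab : a ≠ b) {z : ℍ}
    (hz : |a - z.re| ≤ |b - z.re|) :
    cauchyDensity z b ≤
      (2 + 4 * (2 * b ^ 2 + 1) / (a - b) ^ 2) / Real.cosh (dist z UpperHalfPlane.I) := by
  set K := 2 + 4 * (2 * b ^ 2 + 1) / (a - b) ^ 2
  have key := sq_add_sq_add_one_le hab hz z.im
  calc cauchyDensity z b ≤ (z.im / 2) / ((b - z.re) ^ 2 + z.im ^ 2) := cauchyDensity_le_half z b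
    _ ≤ K * (2 * z.im) / (z.re ^ 2 + z.im ^ 2 + 1) := by
        rw [div_le_div_iff₀ (by positivity) (by positivity)]
        nlinarith [z.im_pos]
    _ = K / Real.cosh (dist z UpperHalfPlane.I) := by rw [cosh_dist_I, div_div_eq_mul_div]

variable {n : ℕ}

lemma exists_cauchyDensity_le_div_cosh_dist {x : Fin n → ℝ} (hx : Injective x) :
    ∃ K : ℝ, 0 ≤ K ∧ ∀ (z : ℍ) (i j : Fin n), i ≠ j → |x i - z.re| ≤ |x j - z.re| →
      cauchyDensity z (x j) ≤ K / Real.cosh (dist z UpperHalfPlane.I) := by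
  obtain ⟨M, hM⟩ := Finite.exists_le fun p : Fin n × Fin n =>
    2 + 4 * (2 * x p.2 ^ 2 + 1) / (x p.1 - x p.2) ^ 2
  refine ⟨max M 0, le_max_right _ _, fun z i j hij hz => ?_⟩
  refine (cauchyDensity_le_div_cosh_dist (hx.ne hij) hz).trans ?_
  have := Real.cosh_pos (dist z UpperHalfPlane.I)
  gcongr
  exact (hM (i, j)).trans (le_max_left _ _)

/- With `c = cosh (dist z I)`, the factor of the sample point nearest to `z` is at most `c`, and
each of the other `n - 1 ≥ 2` factors is `O(1 / c)`. -/
lemma exists_cauchyL_le_div_cosh_dist (hn : 3 ≤ n) {x : Fin n → ℝ} (hx : Injective x) :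
    ∃ C : ℝ, ∀ z : ℍ, cauchyL x z ≤ C / Real.cosh (dist z UpperHalfPlane.I) := by
  obtain ⟨K, hK, hfar⟩ := exists_cauchyDensity_le_div_cosh_dist hx
  obtain ⟨k, rfl⟩ := Nat.exists_eq_add_of_le' hn
  refine ⟨K ^ (k + 2), fun z => ?_⟩
  obtain ⟨i, -, hnear⟩ := exists_min_image univ (fun j => |x j - z.re|) univ_nonempty
  set c := Real.cosh (dist z UpperHalfPlane.I)
  have hc : 1 ≤ c := Real.one_le_cosh _
  have hothers : ∏ j ∈ univ.erase i, cauchyDensity z (x j) ≤ (K / c) ^ (k + 2) := by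
    refine (prod_le_prod (fun j _ => (cauchyDensity_pos z (x j)).le) fun j hj =>
      hfar z i j (ne_of_mem_erase hj).symm (hnear j (mem_univ j))).trans_eq ?_
    rw [prod_const, card_erase_of_mem (mem_univ i), card_univ, Fintype.card_fin]
    rfl
  calc cauchyL x z = cauchyDensity z (x i) * ∏ j ∈ univ.erase i, cauchyDensity z (x j) :=
        (mul_prod_erase univ (fun j => cauchyDensity z (x j)) (mem_univ i)).symm
    _ ≤ c * (K / c) ^ (k + 2) :=
        mul_le_mul (cauchyDensity_le_cosh_dist z (x i)) hothers
          (prod_nonneg fun j _ => (cauchyDensity_pos z (x j)).le) (by positivity)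
    _ = K ^ (k + 2) / c ^ (k + 1) := by
        rw [div_pow, pow_succ c (k + 1)]
        field_simp
    _ ≤ K ^ (k + 2) / c := by
        gcongr
        exact le_self_pow₀ hc k.succ_ne_zero

lemma cauchyL_pos (x : Fin n → ℝ) (z : ℍ) : 0 < cauchyL x z :=
  prod_pos fun j _ => cauchyDensity_pos z (x j)

lemma continuous_cauchyL (x : Fin n → ℝ) : Continuous fun z : ℍ => cauchyL x z := by
  refine continuous_finsetProd _ fun j _ => Continuous.div (by fun_prop) (by fun_prop) fun z => ?_
  have : (z : ℂ).im ≠ 0 := z.im_ne_zero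
  positivity

lemma exists_forall_cauchyL_le (hn : 3 ≤ n) {x : Fin n → ℝ} (hx : Injective x) :
    ∃ z : ℍ, ∀ w : ℍ, cauchyL x w ≤ cauchyL x z := by
  obtain ⟨C, hC⟩ := exists_cauchyL_le_div_cosh_dist hn hx
  have hL := cauchyL_pos x UpperHalfPlane.I
  refine (continuous_cauchyL x).exists_forall_ge_of_isBounded UpperHalfPlane.I <|
    (Metric.isBounded_closedBall (x := UpperHalfPlane.I)
      (r := C / cauchyL x UpperHalfPlane.I)).subset fun z hz => ?_
  calc dist z UpperHalfPlane.I ≤ Real.sinh (dist z UpperHalfPlane.I) :=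
        Real.self_le_sinh_iff.mpr dist_nonneg
    _ ≤ Real.cosh (dist z UpperHalfPlane.I) := (Real.sinh_lt_cosh _).le
    _ ≤ C / cauchyL x UpperHalfPlane.I := by
        rw [le_div_comm₀ (Real.cosh_pos _) hL]
        exact (show cauchyL x UpperHalfPlane.I ≤ cauchyL x z from hz).trans (hC z)

lemma hasDerivAt_cauchyDensity_line (z : ℍ) (v : ℂ) (t : ℝ) :
    HasDerivAt (fun ε : ℝ => cauchyDensity (z + ε * v) t)
      (cauchyDensity z t * (v.im / z.im - 2 * (v * ((z : ℂ) - t)⁻¹).re)) 0 := by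
  have him : HasDerivAt (fun ε : ℝ => z.im + ε * v.im) v.im 0 := by
    simpa using ((hasDerivAt_id (0 : ℝ)).mul_const v.im).const_add z.im
  have hre : HasDerivAt (fun ε : ℝ => t - (z.re + ε * v.re)) (-v.re) 0 := by
    simpa using (((hasDerivAt_id (0 : ℝ)).mul_const v.re).const_add z.re).const_sub t
  have hne : (t - z.re) ^ 2 + z.im ^ 2 ≠ 0 := by positivity
  have hquot := (him.div_const Real.pi).div ((hre.pow 2).add (him.pow 2)) (by simpa using hne)
  have hinv : (v * ((z : ℂ) - t)⁻¹).re =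
      (v.re * (z.re - t) + v.im * z.im) / ((t - z.re) ^ 2 + z.im ^ 2) := by
    have hsq : normSq ((z : ℂ) - t) = (t - z.re) ^ 2 + z.im ^ 2 := by
      simp only [normSq_apply, sub_re, sub_im, ofReal_re, ofReal_im, UpperHalfPlane.coe_re,
        UpperHalfPlane.coe_im]
      ring
    simp only [mul_re, inv_re, inv_im, hsq, sub_re, sub_im, ofReal_re, ofReal_im,
      UpperHalfPlane.coe_re, UpperHalfPlane.coe_im]
    ring
  convert! hquot using 1
  · ext ε
    simp [cauchyDensity]
  · rw [hinv]
    simp only [cauchyDensity, UpperHalfPlane.coe_im, UpperHalfPlane.coe_re, Pi.add_apply,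
      Pi.pow_apply, zero_mul, add_zero, Nat.cast_ofNat, Nat.add_one_sub_one, pow_one]
    field_simp
    ring

lemma logDeriv_cauchyL_line (x : Fin n → ℝ) (z : ℍ) (v : ℂ) :
    logDeriv (fun ε : ℝ => cauchyL x (z + ε * v)) 0 =
      n * (v.im / z.im) - 2 * (v * cauchyTransform x z).re := by
  have hfactor (j : Fin n) : logDeriv (fun ε : ℝ => cauchyDensity (z + ε * v) (x j)) 0 =
      v.im / z.im - 2 * (v * cauchyKernel x z j).re := by
    have hpos := cauchyDensity_pos z (x j)
    rw [logDeriv_apply, (hasDerivAt_cauchyDensity_line z v (x j)).deriv]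
    simp [cauchyKernel, hpos.ne']
  change logDeriv (fun ε : ℝ => ∏ j, cauchyDensity (z + ε * v) (x j)) 0 = _
  rw [logDeriv_prod (fun j _ => by simpa using (cauchyDensity_pos z (x j)).ne')
    (fun j _ => (hasDerivAt_cauchyDensity_line z v (x j)).differentiableAt)]
  simp only [hfactor, sum_sub_distrib, sum_const, card_univ, Fintype.card_fin, nsmul_eq_mul,
    ← mul_sum, ← re_sum, cauchyTransform]

lemma logDeriv_cauchyL_line_eq_zero {x : Fin n → ℝ} {z : ℍ}
    (hz : ∀ w : ℍ, cauchyL x w ≤ cauchyL x z) (v : ℂ) :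
    logDeriv (fun ε : ℝ => cauchyL x (z + ε * v)) 0 = 0 := by
  have himpos : ∀ᶠ ε : ℝ in nhds 0, 0 < ((z : ℂ) + ε * v).im :=
    ContinuousAt.eventually_lt (by fun_prop) (by fun_prop) (by simpa using z.im_pos)
  have hmax : IsLocalMax (fun ε : ℝ => cauchyL x (z + ε * v)) 0 := by
    filter_upwards [himpos] with ε hε
    simpa using hz ⟨_, hε⟩
  rw [logDeriv_apply, hmax.deriv_eq_zero, zero_div]

lemma cauchyTransform_eq_of_forall_cauchyL_le {x : Fin n → ℝ} {z : ℍ}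
    (hz : ∀ w : ℍ, cauchyL x w ≤ cauchyL x z) :
    cauchyTransform x z = n / (z - conj (z : ℂ)) := by
  have hcrit (v : ℂ) : n * (v.im / z.im) - 2 * (v * cauchyTransform x z).re = 0 := by
    rw [← logDeriv_cauchyL_line, logDeriv_cauchyL_line_eq_zero hz]
  have hre : (cauchyTransform x z).re = 0 := by simpa using hcrit 1
  have him : n / z.im + 2 * (cauchyTransform x z).im = 0 := by
    simpa [div_eq_mul_inv] using hcrit I
  have hz0 := z.im_ne_zero
  field_simp at him
  rw [eq_div_iff (by simpa [sub_conj] using hz0), sub_conj]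
  apply Complex.ext
  · simpa [hre] using by linear_combination -him
  · simp [hre]

lemma Qmap_eq_self_of_forall_cauchyL_le [NeZero n] {x : Fin n → ℝ} {z : ℍ}
    (hz : ∀ w : ℍ, cauchyL x w ≤ cauchyL x z) : Qmap x z = z := by
  have hq : qmap x z = conj (z : ℂ) := by
    rw [qmap_eq x z.im_ne_zero, cauchyTransform_eq_of_forall_cauchyL_le hz,
      div_div_cancel₀ (NeZero.ne (n : ℂ)), sub_sub_cancel]
  rw [Qmap, hq, qmap_conj x z.im_ne_zero, hq, conj_conj]

end Likelihood

theorem stmt_6 (n : ℕ) (hn : 3 ≤ n) (x : Fin n → ℝ) (hx : Function.Injective x) :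
    ∃ θhat : ℂ, 0 < θhat.im ∧ Qmap x θhat = θhat ∧
      (∀ θ : ℂ, 0 < θ.im → Qmap x θ = θ → θ = θhat) ∧
      (∀ θ : ℂ, 0 < θ.im → cauchyL x θ ≤ cauchyL x θhat) ∧
      (∀ θ : ℂ, 0 < θ.im → cauchyL x θ = cauchyL x θhat → θ = θhat) := by
  have : NeZero n := ⟨by lia⟩
  obtain ⟨z, hz⟩ := exists_forall_cauchyL_le hn hx
  have hQz : Qmap x z = z := Qmap_eq_self_of_forall_cauchyL_le hz
  refine ⟨z, z.im_pos, hQz, fun θ hθ hQ => ?_, fun θ hθ => hz ⟨θ, hθ⟩, fun θ hθ hL => ?_⟩ <;>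
    lift θ to ℍ using hθ
  · rw [eq_of_Qmap_eq_self hn hx hQ hQz]
  · have hQ : Qmap x θ = θ := Qmap_eq_self_of_forall_cauchyL_le fun w => hL ▸ hz w
    rw [eq_of_Qmap_eq_self hn hx hQ hQz]
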